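/- For every integer k ≥ 2 there exists a sequence (f_v)_{v ∈ ℕ}, where f_v is a k-uniform hypergraph property on v vertices, together with constants c, C > 0 and v₀ ∈ ℕ, such that c · v^{k/2} ≤ s(f_v) ≤ C · v^{k/2} for all v ≥ v₀; that is, s(f_v) = Θ(v^{k/2}) where the number of variables is n = C(v,k). -/

import Mathlib

open Finset

/-- The coordinate set: `k`-element subsets of `Fin v`. -/
abbrev KSet (v k : ℕ) : Type := {S : Finset (Fin v) // S.card = k}

/-- A `k`-uniform hypergraph on `Fin v`: a Boolean function on `k`-sets. -/
abbrev HGraph (v k : ℕ) : Type := KSet v k → Bool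

/-- Sensitivity of `f` at input `x`: the number of coordinates whose flip changes `f`. -/
def localSens {I : Type} [Fintype I] [DecidableEq I]
    (f : (I → Bool) → Bool) (x : I → Bool) : ℕ :=
  (Finset.univ.filter fun i => f (Function.update x i (!x i)) ≠ f x).card

/-- Sensitivity of `f`: maximum of `localSens f x` over all inputs `x`. -/
def sens {I : Type} [Fintype I] [DecidableEq I] (f : (I → Bool) → Bool) : ℕ :=
  Finset.univ.sup (localSens f)

/-- `sensOn b f` is `s^b(f)`: max sensitivity over inputs with `f x = b`. -/
def sensOn {I : Type} [Fintype I] [DecidableEq I] (b : Bool) (f : (I → Bool) → Bool) : ℕ :=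
  (Finset.univ.filter fun x => f x = b).sup (localSens f)

/-- Flip all the coordinates of `x` in the block `B`. -/
def flipBlock {I : Type} [DecidableEq I] (x : I → Bool) (B : Finset I) : I → Bool :=
  fun i => if i ∈ B then !x i else x i

/-- Block sensitivity of `f` at `x`: maximum number of pairwise disjoint sensitive blocks. -/
noncomputable def localBlockSens {I : Type} [Fintype I] [DecidableEq I]
    (f : (I → Bool) → Bool) (x : I → Bool) : ℕ :=
  sSup {n : ℕ | ∃ B : Fin n → Finset I,
    (∀ j, f (flipBlock x (B j)) ≠ f x) ∧
    ∀ j j', j ≠ j' → Disjoint (B j) (B j')}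

/-- Block sensitivity of `f`. -/
noncomputable def blockSens {I : Type} [Fintype I] [DecidableEq I]
    (f : (I → Bool) → Bool) : ℕ :=
  Finset.univ.sup (localBlockSens f)

/-- Image of a `k`-set under a permutation of the vertices. -/
def permKSet {v k : ℕ} (σ : Equiv.Perm (Fin v)) (S : KSet v k) : KSet v k :=
  ⟨S.1.map σ.toEmbedding, by rw [Finset.card_map]; exact S.2⟩

/-- A `k`-uniform hypergraph property: invariance under all vertex permutations,
where `(σ • G) S = G (σ⁻¹ S)`. -/
def IsHypergraphProperty {v k : ℕ} (f : HGraph v k → Bool) : Prop :=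
  ∀ (σ : Equiv.Perm (Fin v)) (G : HGraph v k),
    f (fun S => G (permKSet σ⁻¹ S)) = f G

/-!
Write `k = r + 1` and let `f` be the property of having an isolated clique on exactly `a` vertices.

* If `f G` is true, an isolated clique `A` of `G` is certified by the `k`-sets with at most one
  vertex outside `A`, of which there are at most `a.choose r * v`.
* If `f G` is false, flipping a sensitive `k`-set creates an isolated clique. Hypergraphs with two
  distinct isolated `a`-cliques sharing at least `r` vertices differ in at least four `k`-sets,
  but two flips of `G` differ in at most two. So the cliques created pairwise share fewer than `r`
  vertices, and there are at most `v.choose r / a.choose r` of them.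
* If the edges of `G` are exactly the `k`-subsets of an `a`-set `A`, every certifying `k`-set is
  sensitive, and at least `a.choose r * (v - a)` of them exist.

With `a` of order `v ^ ((r - 1) / (2 * r))`, `a.choose r` has order `v ^ ((r - 1) / 2)` and all
three bounds have order `v ^ ((r + 1) / 2)`.
-/

section Counting

variable {α : Type*} [DecidableEq α]

lemma card_filter_powersetCard_card_inter_eq (A B : Finset α) (r m : ℕ) :
    #{S ∈ A.powersetCard (r + m) | #(S ∩ B) = r} =
      (#(A ∩ B)).choose r * (#(A \ B)).choose m := by
  rw [← card_powersetCard, ← card_powersetCard, ← card_product]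
  refine card_nbij' (fun S => (S ∩ B, S \ B)) (fun P => P.1 ∪ P.2) ?_ ?_ ?_ ?_
  · intro S hS
    simp only [coe_filter, mem_powersetCard, Set.mem_ofPred_eq] at hS
    have hsum := card_sdiff_add_card_inter S B
    simp only [coe_product, Set.mem_prod, mem_coe, mem_powersetCard]
    exact ⟨⟨inter_subset_inter_right hS.1.1, hS.2⟩, sdiff_subset_sdiff hS.1.1 subset_rfl, by omega⟩
  · rintro ⟨T, U⟩ hTU
    simp only [coe_product, Set.mem_prod, mem_coe, mem_powersetCard, subset_inter_iff,
      subset_sdiff] at hTU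
    obtain ⟨⟨⟨hTA, hTB⟩, hT⟩, ⟨hUA, hUB⟩, hU⟩ := hTU
    simp only [coe_filter, mem_powersetCard, Set.mem_ofPred_eq]
    refine ⟨⟨union_subset hTA hUA, ?_⟩, ?_⟩
    · rw [card_union_of_disjoint (hUB.symm.mono_left hTB), hT, hU]
    · rw [union_inter_distrib_right, inter_eq_left.2 hTB, disjoint_iff_inter_eq_empty.1 hUB,
        union_empty, hT]
  · intro S _
    exact (union_comm _ _).trans (sdiff_union_inter S B)
  · rintro ⟨T, U⟩ hTU
    simp only [coe_product, Set.mem_prod, mem_coe, mem_powersetCard, subset_inter_iff,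
      subset_sdiff] at hTU
    obtain ⟨⟨⟨-, hTB⟩, -⟩, ⟨-, hUB⟩, -⟩ := hTU
    simp only [union_inter_distrib_right, union_sdiff_distrib, inter_eq_left.2 hTB,
      sdiff_eq_empty_iff_subset.2 hTB, disjoint_iff_inter_eq_empty.1 hUB,
      sdiff_eq_self_of_disjoint hUB, union_empty, empty_union]

lemma card_mul_choose_le_choose_of_card_inter_lt [Fintype α] {ι : Type*} {s : Finset ι}
    {A : ι → Finset α} {a r : ℕ} (hcard : ∀ i ∈ s, #(A i) = a)
    (hinter : (s : Set ι).Pairwise fun i j => #(A i ∩ A j) < r) :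
    #s * a.choose r ≤ (Fintype.card α).choose r := by
  have hdisj : (s : Set ι).PairwiseDisjoint fun i => (A i).powersetCard r := by
    intro i hi j hj hij
    refine disjoint_left.2 fun T hTi hTj => ?_
    rw [mem_powersetCard] at hTi hTj
    have hT : #T ≤ #(A i ∩ A j) := card_le_card (subset_inter hTi.1 hTj.1)
    have := hinter hi hj hij
    omega
  calc #s * a.choose r = ∑ i ∈ s, #((A i).powersetCard r) := by
        rw [sum_congr rfl fun i hi => by rw [card_powersetCard, hcard i hi], sum_const, smul_eq_mul]
    _ = #(s.biUnion fun i => (A i).powersetCard r) := (card_biUnion hdisj).symm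
    _ ≤ #((univ : Finset α).powersetCard r) :=
        card_le_card <| biUnion_subset.2 fun i _ => powersetCard_mono (subset_univ _)
    _ = (Fintype.card α).choose r := by rw [card_powersetCard, card_univ]

end Counting

lemma hammingDist_update_le_one {ι : Type*} {β : ι → Type*} [Fintype ι] [DecidableEq ι]
    [∀ i, DecidableEq (β i)] (x : ∀ i, β i) (i : ι) (b : β i) :
    hammingDist x (Function.update x i b) ≤ 1 := by
  refine (card_le_card fun j hj => ?_).trans (card_singleton i).le
  by_contra hji
  refine (mem_filter.1 hj).2 (Function.update_of_ne ?_ _ _).symm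
  simpa only [mem_singleton] using hji

section Sensitivity

variable {I : Type} [Fintype I] [DecidableEq I]

lemma localSens_le_card_of_certificate {f : (I → Bool) → Bool} {x : I → Bool} {D : Finset I}
    (hD : ∀ y, (∀ i ∈ D, y i = x i) → f y = f x) : localSens f x ≤ #D := by
  refine card_le_card fun i hi => ?_
  by_contra hiD
  refine (mem_filter.1 hi).2 (hD _ fun j hj => ?_)
  exact Function.update_of_ne (ne_of_mem_of_not_mem hj hiD) _ _

lemma localSens_le_sens (f : (I → Bool) → Bool) (x : I → Bool) : localSens f x ≤ sens f :=
  le_sup (mem_univ x)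

end Sensitivity

section KSets

variable {v r : ℕ}

lemma card_filter_kSet (k : ℕ) (P : Finset (Fin v) → Prop) [DecidablePred P] :
    #{S : KSet v k | P S.1} = #{S ∈ (univ : Finset (Fin v)).powersetCard k | P S} := by
  rw [← card_map (Function.Embedding.subtype _)]
  congr 1
  ext S
  simp [and_comm]

lemma card_kSet_subset (k : ℕ) (A : Finset (Fin v)) :
    #{S : KSet v k | S.1 ⊆ A} = (#A).choose k := by
  rw [card_filter_kSet k (· ⊆ A), ← card_powersetCard]
  congr 1
  ext S
  simp [mem_powersetCard, and_comm]

lemma card_kSet_subset_card_inter_eq (A B : Finset (Fin v)) :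
    #{S : KSet v (r + 1) | S.1 ⊆ A ∧ #(S.1 ∩ B) = r} = (#(A ∩ B)).choose r * #(A \ B) := by
  rw [card_filter_kSet (r + 1) fun S => S ⊆ A ∧ #(S ∩ B) = r, ← Nat.choose_one_right #(A \ B),
    ← card_filter_powersetCard_card_inter_eq]
  congr 1
  ext S
  simp only [mem_filter, mem_powersetCard, subset_univ, true_and]
  tauto

lemma two_le_card_kSet_subset_card_inter_eq {A B : Finset (Fin v)} (hr : 1 ≤ r)
    (hA : r + 2 ≤ #A) (hAB : ¬ A ⊆ B) (hinter : r ≤ #(A ∩ B)) :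
    2 ≤ #{S : KSet v (r + 1) | S.1 ⊆ A ∧ #(S.1 ∩ B) = r} := by
  rw [card_kSet_subset_card_inter_eq]
  have hsum := card_sdiff_add_card_inter A B
  have hpos : 1 ≤ #(A \ B) := card_pos.2 (sdiff_nonempty.2 hAB)
  rcases hinter.eq_or_lt with heq | hlt
  · rw [← heq, Nat.choose_self]
    omega
  · have hchoose : r + 1 ≤ (#(A ∩ B)).choose r :=
      (Nat.choose_succ_self_right r).ge.trans (Nat.choose_le_choose r hlt)
    nlinarith

end KSets

section IsolatedClique

variable {v r : ℕ}

/-- The hypergraph whose edges are exactly the `k`-subsets of `A`. -/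
def cliqueOn {v k : ℕ} (A : Finset (Fin v)) : HGraph v k := fun S => decide (S.1 ⊆ A)

/-- The `(r + 1)`-sets with at most one vertex outside `A`: the coordinates on which being an
isolated clique depends. -/
def cliqueNhd (A : Finset (Fin v)) : Finset (KSet v (r + 1)) := {S | r ≤ #(S.1 ∩ A)}

/-- `A` is an isolated clique of the `(r + 1)`-uniform hypergraph `G`: all `(r + 1)`-subsets of `A`
are edges, and no edge has exactly one vertex outside `A`. Edges with two or more vertices
outside `A` are allowed. -/
def IsIsolatedClique (G : HGraph v (r + 1)) (A : Finset (Fin v)) : Prop :=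
  ∀ S ∈ cliqueNhd A, G S = cliqueOn A S

open Classical in
/-- The property of having an isolated clique on exactly `a` vertices. -/
noncomputable def hasIsolatedClique (a : ℕ) (G : HGraph v (r + 1)) : Bool :=
  decide (∃ A : Finset (Fin v), #A = a ∧ IsIsolatedClique G A)

lemma hasIsolatedClique_eq_true_iff {a : ℕ} {G : HGraph v (r + 1)} :
    hasIsolatedClique a G = true ↔ ∃ A : Finset (Fin v), #A = a ∧ IsIsolatedClique G A := by
  simp [hasIsolatedClique]

lemma hasIsolatedClique_eq_false_iff {a : ℕ} {G : HGraph v (r + 1)} :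
    hasIsolatedClique a G = false ↔ ∀ A : Finset (Fin v), #A = a → ¬ IsIsolatedClique G A := by
  rw [← Bool.not_eq_true, hasIsolatedClique_eq_true_iff]
  push Not
  rfl

lemma mem_cliqueNhd {A : Finset (Fin v)} {S : KSet v (r + 1)} :
    S ∈ cliqueNhd A ↔ r ≤ #(S.1 ∩ A) := by
  simp only [cliqueNhd, mem_filter, mem_univ, true_and]

lemma mem_cliqueNhd_of_subset {A : Finset (Fin v)} {S : KSet v (r + 1)} (hS : S.1 ⊆ A) :
    S ∈ cliqueNhd A := by
  rw [mem_cliqueNhd, inter_eq_left.2 hS, S.2]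
  exact r.le_succ

lemma isIsolatedClique_cliqueOn (A : Finset (Fin v)) :
    IsIsolatedClique (cliqueOn A : HGraph v (r + 1)) A :=
  fun _ _ => rfl

lemma card_cliqueNhd (A : Finset (Fin v)) :
    #(cliqueNhd A : Finset (KSet v (r + 1))) =
      (#A).choose (r + 1) + (#A).choose r * (v - #A) := by
  have hsplit : (cliqueNhd A : Finset (KSet v (r + 1))) =
      ({S : KSet v (r + 1) | S.1 ⊆ A} : Finset _) ∪
        ({S : KSet v (r + 1) | S.1 ⊆ univ ∧ #(S.1 ∩ A) = r} : Finset _) := by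
    ext S
    have hle : #(S.1 ∩ A) ≤ r + 1 := (card_le_card inter_subset_left).trans S.2.le
    have hsub : S.1 ⊆ A ↔ #(S.1 ∩ A) = r + 1 :=
      ⟨fun h => by rw [inter_eq_left.2 h, S.2],
        fun h => inter_eq_left.1 (eq_of_subset_of_card_le inter_subset_left (S.2.trans h.symm).le)⟩
    simp only [mem_cliqueNhd, mem_union, mem_filter, mem_univ, subset_univ, true_and, hsub]
    omega
  have hdisj : Disjoint ({S : KSet v (r + 1) | S.1 ⊆ A} : Finset _)
      ({S : KSet v (r + 1) | S.1 ⊆ univ ∧ #(S.1 ∩ A) = r} : Finset _) := by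
    refine disjoint_filter.2 fun S _ hS hSr => ?_
    have hSr := hSr.2
    rw [inter_eq_left.2 hS, S.2] at hSr
    omega
  rw [hsplit, card_union_of_disjoint hdisj, card_kSet_subset, card_kSet_subset_card_inter_eq,
    univ_inter, ← compl_eq_univ_sdiff, card_compl, Fintype.card_fin]

lemma card_cliqueNhd_le (A : Finset (Fin v)) :
    #(cliqueNhd A : Finset (KSet v (r + 1))) ≤ (#A).choose r * v := by
  have hAv : #A ≤ v := by simpa only [Fintype.card_fin] using card_le_univ A
  have hchoose : (#A).choose (r + 1) ≤ (#A).choose r * #A :=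
    calc (#A).choose (r + 1) ≤ (#A).choose (r + 1) * (r + 1) := Nat.le_mul_of_pos_right _ r.succ_pos
      _ = (#A).choose r * (#A - r) := Nat.choose_succ_right_eq _ _
      _ ≤ (#A).choose r * #A := Nat.mul_le_mul_left _ (Nat.sub_le _ _)
  calc #(cliqueNhd A : Finset (KSet v (r + 1)))
      ≤ (#A).choose r * #A + (#A).choose r * (v - #A) := by
        rw [card_cliqueNhd]
        exact Nat.add_le_add_right hchoose _
    _ = (#A).choose r * v := by rw [← mul_add, Nat.add_sub_cancel' hAv]

end IsolatedClique

section Invariance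

variable {v r : ℕ}

lemma permKSet_surjective {k : ℕ} (σ : Equiv.Perm (Fin v)) :
    Function.Surjective (permKSet σ : KSet v k → KSet v k) := by
  refine fun S => ⟨permKSet σ.symm S, Subtype.ext ?_⟩
  ext x
  simp only [permKSet, mem_map_equiv, Equiv.symm_symm, Equiv.apply_symm_apply]

lemma isIsolatedClique_comp_permKSet_iff {G : HGraph v (r + 1)} {A : Finset (Fin v)}
    (σ : Equiv.Perm (Fin v)) :
    IsIsolatedClique (fun S => G (permKSet σ S)) A ↔ IsIsolatedClique G (A.map σ.toEmbedding) := by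
  have hmem (S : KSet v (r + 1)) :
      permKSet σ S ∈ cliqueNhd (A.map σ.toEmbedding) ↔ S ∈ cliqueNhd A := by
    simp only [mem_cliqueNhd, permKSet, ← map_inter, card_map]
  have hclique (S : KSet v (r + 1)) :
      cliqueOn (A.map σ.toEmbedding) (permKSet σ S) = cliqueOn A S := by
    simp only [cliqueOn, permKSet, map_subset_map]
  exact ((permKSet_surjective σ).forall.trans <|
    forall_congr' fun S => by rw [hmem, hclique]).symm

lemma isHypergraphProperty_hasIsolatedClique (a : ℕ) :
    IsHypergraphProperty (hasIsolatedClique a : HGraph v (r + 1) → Bool) := by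
  intro σ G
  rw [Bool.eq_iff_iff, hasIsolatedClique_eq_true_iff, hasIsolatedClique_eq_true_iff]
  exact ((Equiv.finsetCongr σ⁻¹).surjective.exists.trans <| exists_congr fun A => by
    rw [isIsolatedClique_comp_permKSet_iff, Equiv.finsetCongr_apply, card_map]).symm

end Invariance

section Separation

variable {v r : ℕ} {A B : Finset (Fin v)} {G H : HGraph v (r + 1)}

lemma IsIsolatedClique.ne_of_subset_of_card_inter_eq (hG : IsIsolatedClique G A)
    (hH : IsIsolatedClique H B) {S : KSet v (r + 1)} (hSA : S.1 ⊆ A) (hSB : #(S.1 ∩ B) = r) :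
    G S ≠ H S := by
  have hSB' : ¬ S.1 ⊆ B := by
    intro h
    rw [inter_eq_left.2 h, S.2] at hSB
    omega
  rw [hG S (mem_cliqueNhd_of_subset hSA), hH S (mem_cliqueNhd.2 hSB.ge)]
  simp only [cliqueOn, hSA, hSB', decide_true, decide_false, ne_eq, Bool.true_eq_false,
    not_false_eq_true]

lemma IsIsolatedClique.four_le_hammingDist (hr : 1 ≤ r) (hA : r + 2 ≤ #A) (hcard : #A = #B)
    (hne : A ≠ B) (hinter : r ≤ #(A ∩ B)) (hG : IsIsolatedClique G A)
    (hH : IsIsolatedClique H B) : 4 ≤ hammingDist G H := by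
  have hAB : ¬ A ⊆ B := fun h => hne (eq_of_subset_of_card_le h hcard.ge)
  have hBA : ¬ B ⊆ A := fun h => hne (eq_of_subset_of_card_le h hcard.le).symm
  let P : Finset (KSet v (r + 1)) := {S | S.1 ⊆ A ∧ #(S.1 ∩ B) = r}
  let Q : Finset (KSet v (r + 1)) := {S | S.1 ⊆ B ∧ #(S.1 ∩ A) = r}
  have hP : 2 ≤ #P := two_le_card_kSet_subset_card_inter_eq hr hA hAB hinter
  have hQ : 2 ≤ #Q := two_le_card_kSet_subset_card_inter_eq hr (hcard ▸ hA) hBA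
    (inter_comm A B ▸ hinter)
  have hdisj : Disjoint P Q := by
    refine disjoint_filter.2 fun S _ hSP hSQ => ?_
    have hS := hSP.2
    rw [inter_eq_left.2 hSQ.1, S.2] at hS
    omega
  calc 4 ≤ #P + #Q := by omega
    _ = #(P ∪ Q) := (card_union_of_disjoint hdisj).symm
    _ ≤ hammingDist G H := card_le_card <| union_subset
        (fun S hS => mem_filter.2 ⟨mem_univ S, hG.ne_of_subset_of_card_inter_eq hH
          (mem_filter.1 hS).2.1 (mem_filter.1 hS).2.2⟩)
        (fun S hS => mem_filter.2 ⟨mem_univ S, (hH.ne_of_subset_of_card_inter_eq hG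
          (mem_filter.1 hS).2.1 (mem_filter.1 hS).2.2).symm⟩)

lemma IsIsolatedClique.choose_le_hammingDist_cliqueOn (hinter : #(A ∩ B) ≤ r)
    (hH : IsIsolatedClique H B) : (#B).choose (r + 1) ≤ hammingDist (cliqueOn A) H := by
  rw [← card_kSet_subset]
  refine card_le_card fun S hS => mem_filter.2 ⟨mem_univ S, ?_⟩
  have hSB : S.1 ⊆ B := (mem_filter.1 hS).2
  have hSA : ¬ S.1 ⊆ A := by
    intro h
    have := card_le_card (subset_inter h hSB)
    have := S.2
    omega
  rw [hH S (mem_cliqueNhd_of_subset hSB)]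
  simp only [cliqueOn, hSA, hSB, decide_true, decide_false, ne_eq, Bool.false_eq_true,
    not_false_eq_true]

lemma IsIsolatedClique.two_le_hammingDist_cliqueOn (hr : 1 ≤ r) (hA : r + 2 ≤ #A)
    (hcard : #A = #B) (hne : A ≠ B) (hH : IsIsolatedClique H B) :
    2 ≤ hammingDist (cliqueOn A) H := by
  rcases le_total r #(A ∩ B) with hinter | hinter
  · have := (isIsolatedClique_cliqueOn A).four_le_hammingDist hr hA hcard hne hinter hH
    omega
  · calc 2 ≤ r + 2 := by omega
      _ = (r + 2).choose (r + 1) := (Nat.choose_succ_self_right _).symm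
      _ ≤ (#B).choose (r + 1) := Nat.choose_le_choose _ (hcard ▸ hA)
      _ ≤ hammingDist (cliqueOn A) H := hH.choose_le_hammingDist_cliqueOn hinter

end Separation

section SensitivityOfIsolatedClique

variable {v r a : ℕ}

lemma localSens_hasIsolatedClique_le_of_eq_true {G : HGraph v (r + 1)}
    (hG : hasIsolatedClique a G = true) :
    localSens (hasIsolatedClique a) G ≤ a.choose r * v := by
  obtain ⟨A, rfl, hA⟩ := hasIsolatedClique_eq_true_iff.1 hG
  refine (localSens_le_card_of_certificate fun H hH => ?_).trans (card_cliqueNhd_le A)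
  rw [hG, hasIsolatedClique_eq_true_iff]
  exact ⟨A, rfl, fun S hS => (hH S hS).trans (hA S hS)⟩

lemma isIsolatedClique_of_flip_of_flip {G : HGraph v (r + 1)} {A : Finset (Fin v)}
    {S T : KSet v (r + 1)} (hST : S ≠ T)
    (hS : IsIsolatedClique (Function.update G S (!G S)) A)
    (hT : IsIsolatedClique (Function.update G T (!G T)) A) : IsIsolatedClique G A := by
  intro U hU
  by_cases hUS : U = S
  · simpa only [Function.update_of_ne (hUS.trans_ne hST)] using hT U hU
  · simpa only [Function.update_of_ne hUS] using hS U hU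

lemma localSens_hasIsolatedClique_mul_choose_le_of_eq_false (hr : 1 ≤ r) (ha : r + 2 ≤ a)
    {G : HGraph v (r + 1)} (hG : hasIsolatedClique a G = false) :
    localSens (hasIsolatedClique a) G * a.choose r ≤ v.choose r := by
  rw [hasIsolatedClique_eq_false_iff] at hG
  have hflip : ∀ S ∈ ({S | hasIsolatedClique a (Function.update G S (!G S)) ≠
      hasIsolatedClique a G} : Finset (KSet v (r + 1))),
      ∃ A : Finset (Fin v), #A = a ∧ IsIsolatedClique (Function.update G S (!G S)) A := by
    intro S hS
    rw [mem_filter, hasIsolatedClique_eq_false_iff.2 hG, ne_eq, Bool.not_eq_false] at hS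
    exact hasIsolatedClique_eq_true_iff.1 hS.2
  choose! A hcard hA using hflip
  refine (card_mul_choose_le_choose_of_card_inter_lt hcard fun S hS T hT hST => ?_).trans_eq
    (by rw [Fintype.card_fin])
  have hne : A S ≠ A T := fun h =>
    hG _ (hcard S hS) (isIsolatedClique_of_flip_of_flip hST (hA S hS) (h ▸ hA T hT))
  have hdist : hammingDist (Function.update G S (!G S)) (Function.update G T (!G T)) ≤ 2 :=
    (hammingDist_triangle_left _ _ G).trans
      (add_le_add (hammingDist_update_le_one G S _) (hammingDist_update_le_one G T _))
  by_contra! hinter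
  have := (hA S hS).four_le_hammingDist hr (hcard S hS ▸ ha)
    ((hcard S hS).trans (hcard T hT).symm) hne hinter (hA T hT)
  omega

lemma card_cliqueNhd_le_localSens_cliqueOn (hr : 1 ≤ r) {A : Finset (Fin v)}
    (hA : r + 2 ≤ #A) :
    #(cliqueNhd A : Finset (KSet v (r + 1))) ≤
      localSens (hasIsolatedClique #A) (cliqueOn A : HGraph v (r + 1)) := by
  refine card_le_card fun S hS => mem_filter.2 ⟨mem_univ S, ?_⟩
  rw [hasIsolatedClique_eq_true_iff.2 ⟨A, rfl, isIsolatedClique_cliqueOn A⟩, ne_eq,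
    Bool.not_eq_true, hasIsolatedClique_eq_false_iff]
  intro B hB hflip
  by_cases hAB : A = B
  · subst hAB
    simpa only [Function.update_self, Bool.not_eq_eq_eq_not, Bool.eq_not_self] using hflip S hS
  · have := hflip.two_le_hammingDist_cliqueOn hr hA hB.symm hAB
    have := hammingDist_update_le_one (cliqueOn A) S (!cliqueOn A S)
    omega

lemma choose_mul_le_sens_hasIsolatedClique (hr : 1 ≤ r) (ha : r + 2 ≤ a) (hav : a ≤ v) :
    a.choose r * (v - a) ≤ sens (hasIsolatedClique a : HGraph v (r + 1) → Bool) := by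
  obtain ⟨A, -, rfl⟩ : ∃ A ⊆ (univ : Finset (Fin v)), #A = a :=
    exists_subset_card_eq (by rwa [card_univ, Fintype.card_fin])
  calc (#A).choose r * (v - #A) ≤ #(cliqueNhd A : Finset (KSet v (r + 1))) := by
        rw [card_cliqueNhd]
        exact Nat.le_add_left _ _
    _ ≤ localSens (hasIsolatedClique #A) (cliqueOn A) :=
        card_cliqueNhd_le_localSens_cliqueOn hr ha
    _ ≤ sens (hasIsolatedClique #A) := localSens_le_sens _ _

lemma sens_hasIsolatedClique_le (hr : 1 ≤ r) (ha : r + 2 ≤ a) :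
    sens (hasIsolatedClique a : HGraph v (r + 1) → Bool) ≤
      max (a.choose r * v) (v.choose r / a.choose r) := by
  refine Finset.sup_le fun G _ => ?_
  cases hG : hasIsolatedClique a G with
  | true => exact le_max_of_le_left (localSens_hasIsolatedClique_le_of_eq_true hG)
  | false =>
    exact le_max_of_le_right <| (Nat.le_div_iff_mul_le (Nat.choose_pos (by omega))).2 <|
      localSens_hasIsolatedClique_mul_choose_le_of_eq_false hr ha hG

end SensitivityOfIsolatedClique

lemma rpow_sub_one_div_two_mul_pow {x : ℝ} (hx : 0 ≤ x) {r : ℕ} (hr : r ≠ 0) :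
    (x ^ (((r : ℝ) - 1) / (2 * r))) ^ r = x ^ (((r : ℝ) - 1) / 2) := by
  rw [← Real.rpow_natCast, ← Real.rpow_mul hx]
  congr 1
  field_simp

lemma rpow_sub_one_half_mul_self {x : ℝ} (hx : 0 < x) (s : ℝ) :
    x ^ ((s - 1) / 2) * x = x ^ ((s + 1) / 2) := by
  rw [← Real.rpow_add_one hx.ne']
  congr 1
  ring

lemma rpow_half_mul_rpow_sub_one_half {x : ℝ} (hx : 0 < x) (r : ℕ) :
    x ^ (((r : ℝ) + 1) / 2) * x ^ (((r : ℝ) - 1) / 2) = x ^ r := by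
  rw [← Real.rpow_add hx, ← Real.rpow_natCast]
  congr 1
  ring

section CliqueSize

variable {r v : ℕ}

/-- The clique size `a`, of order `v ^ ((r - 1) / (2 * r))`, that balances the two upper bounds
`a.choose r * v` and `v.choose r / a.choose r` on the sensitivity. The summand `r + 1` makes
`r + 2 ≤ a` when `v ≠ 0`. -/
noncomputable def cliqueSize (r v : ℕ) : ℕ := ⌈(v : ℝ) ^ (((r : ℝ) - 1) / (2 * r))⌉₊ + (r + 1)

lemma add_two_le_cliqueSize (r : ℕ) (hv : 1 ≤ v) : r + 2 ≤ cliqueSize r v := by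
  have hceil : 0 < ⌈(v : ℝ) ^ (((r : ℝ) - 1) / (2 * r))⌉₊ := Nat.ceil_pos.2 (by positivity)
  rw [cliqueSize]
  omega

lemma cliqueSize_le_rpow (hr : 1 ≤ r) (hv : 1 ≤ v) :
    (cliqueSize r v : ℝ) ≤ (r + 3) * (v : ℝ) ^ (((r : ℝ) - 1) / (2 * r)) := by
  have hr' : (1 : ℝ) ≤ r := by exact_mod_cast hr
  have hone : 1 ≤ (v : ℝ) ^ (((r : ℝ) - 1) / (2 * r)) :=
    Real.one_le_rpow (by exact_mod_cast hv) (div_nonneg (by linarith) (by linarith))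
  have hceil := Nat.ceil_lt_add_one (zero_le_one.trans hone)
  rw [cliqueSize]
  push_cast
  nlinarith

lemma two_mul_cliqueSize_le (hr : 1 ≤ r) (hv : 4 * (r + 3) ^ 2 ≤ v) :
    2 * cliqueSize r v ≤ v := by
  have hr' : (1 : ℝ) ≤ r := by exact_mod_cast hr
  have hv₁ : 1 ≤ v := by nlinarith
  have hle_sqrt : (v : ℝ) ^ (((r : ℝ) - 1) / (2 * r)) ≤ √v := by
    rw [Real.sqrt_eq_rpow]
    refine Real.rpow_le_rpow_of_exponent_le (by exact_mod_cast hv₁) ?_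
    rw [div_le_div_iff₀ (by linarith) two_pos]
    linarith
  have hsqrt : 2 * ((r : ℝ) + 3) ≤ √v :=
    Real.le_sqrt_of_sq_le (by exact_mod_cast (by linarith : (2 * (r + 3)) ^ 2 ≤ v))
  have h : 2 * (cliqueSize r v : ℝ) ≤ v :=
    calc 2 * (cliqueSize r v : ℝ)
        ≤ 2 * ((r + 3) * (v : ℝ) ^ (((r : ℝ) - 1) / (2 * r))) := by
          gcongr
          exact cliqueSize_le_rpow hr hv₁
      _ ≤ 2 * (r + 3) * √v := by
          rw [mul_assoc]
          gcongr
      _ ≤ √v * √v := by gcongr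
      _ = v := Real.mul_self_sqrt v.cast_nonneg
  exact_mod_cast h

lemma rpow_div_factorial_le_choose_cliqueSize (hr : 1 ≤ r) (v : ℕ) :
    (v : ℝ) ^ (((r : ℝ) - 1) / 2) / r.factorial ≤ (cliqueSize r v).choose r := by
  refine le_trans ?_ (Nat.pow_le_choose (α := ℝ) r (cliqueSize r v))
  rw [← rpow_sub_one_div_two_mul_pow v.cast_nonneg (Nat.one_le_iff_ne_zero.1 hr)]
  gcongr
  refine (Nat.le_ceil _).trans (Nat.cast_le.2 ?_)
  rw [cliqueSize]
  omega

lemma choose_cliqueSize_le_rpow (hr : 1 ≤ r) (hv : 1 ≤ v) :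
    ((cliqueSize r v).choose r : ℝ) ≤ ((r : ℝ) + 3) ^ r * (v : ℝ) ^ (((r : ℝ) - 1) / 2) :=
  calc ((cliqueSize r v).choose r : ℝ) ≤ (cliqueSize r v : ℝ) ^ r := by
        exact_mod_cast Nat.choose_le_pow _ _
    _ ≤ ((r + 3) * (v : ℝ) ^ (((r : ℝ) - 1) / (2 * r))) ^ r := by
        gcongr
        exact cliqueSize_le_rpow hr hv
    _ = ((r : ℝ) + 3) ^ r * (v : ℝ) ^ (((r : ℝ) - 1) / 2) := by
        rw [mul_pow,
          rpow_sub_one_div_two_mul_pow v.cast_nonneg (Nat.one_le_iff_ne_zero.1 hr)]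

lemma choose_div_choose_cliqueSize_le_rpow (hr : 1 ≤ r) (hv : 1 ≤ v) :
    ((v.choose r / (cliqueSize r v).choose r : ℕ) : ℝ) ≤ (v : ℝ) ^ (((r : ℝ) + 1) / 2) := by
  have hv₀ : (0 : ℝ) < v := by exact_mod_cast hv
  calc ((v.choose r / (cliqueSize r v).choose r : ℕ) : ℝ)
      ≤ v.choose r / (cliqueSize r v).choose r := Nat.cast_div_le
    _ ≤ ((v : ℝ) ^ r / r.factorial) / ((v : ℝ) ^ (((r : ℝ) - 1) / 2) / r.factorial) := by
        gcongr
        · exact Nat.choose_le_pow_div r v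
        · exact rpow_div_factorial_le_choose_cliqueSize hr v
    _ = (v : ℝ) ^ (((r : ℝ) + 1) / 2) := by
        rw [div_div_div_cancel_right₀ (by positivity),
          ← rpow_half_mul_rpow_sub_one_half hv₀ r,
          mul_div_cancel_right₀ _ (by positivity)]

lemma sens_hasIsolatedClique_cliqueSize_le (hr : 1 ≤ r) (hv : 1 ≤ v) :
    (sens (hasIsolatedClique (cliqueSize r v) : HGraph v (r + 1) → Bool) : ℝ) ≤
      ((r : ℝ) + 3) ^ r * (v : ℝ) ^ (((r : ℝ) + 1) / 2) := by
  have hone : 1 ≤ ((r : ℝ) + 3) ^ r := one_le_pow₀ (by linarith [r.cast_nonneg (α := ℝ)])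
  refine (Nat.cast_le.2 (sens_hasIsolatedClique_le hr (add_two_le_cliqueSize r hv))).trans ?_
  rw [Nat.cast_max]
  refine max_le ?_ ?_
  · rw [Nat.cast_mul, ← rpow_sub_one_half_mul_self (Nat.cast_pos.2 hv), ← mul_assoc]
    gcongr
    exact choose_cliqueSize_le_rpow hr hv
  · exact (choose_div_choose_cliqueSize_le_rpow hr hv).trans
      (le_mul_of_one_le_left (by positivity) hone)

lemma le_sens_hasIsolatedClique_cliqueSize (hr : 1 ≤ r) (hv : 4 * (r + 3) ^ 2 ≤ v) :
    1 / (2 * r.factorial) * (v : ℝ) ^ (((r : ℝ) + 1) / 2) ≤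
      sens (hasIsolatedClique (cliqueSize r v) : HGraph v (r + 1) → Bool) := by
  have hv₁ : 1 ≤ v := by nlinarith
  have htwo : 2 * cliqueSize r v ≤ v := two_mul_cliqueSize_le hr hv
  have hle : cliqueSize r v ≤ v := by omega
  have hhalf : (v : ℝ) / 2 ≤ (v - cliqueSize r v : ℕ) := by
    have : 2 * (cliqueSize r v : ℝ) ≤ v := by exact_mod_cast htwo
    rw [Nat.cast_sub hle]
    linarith
  calc 1 / (2 * r.factorial) * (v : ℝ) ^ (((r : ℝ) + 1) / 2)
      = (v : ℝ) ^ (((r : ℝ) - 1) / 2) / r.factorial * (v / 2) := by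
        rw [← rpow_sub_one_half_mul_self (Nat.cast_pos.2 hv₁)]
        field_simp
    _ ≤ (cliqueSize r v).choose r * (v - cliqueSize r v : ℕ) := by
        gcongr
        exact rpow_div_factorial_le_choose_cliqueSize hr v
    _ ≤ sens (hasIsolatedClique (cliqueSize r v) : HGraph v (r + 1) → Bool) := by
        exact_mod_cast choose_mul_le_sens_hasIsolatedClique hr (add_two_le_cliqueSize r hv₁) hle

end CliqueSize

theorem stmt6 (k : ℕ) (hk : 2 ≤ k) :
    ∃ f : (v : ℕ) → (HGraph v k → Bool),
      (∀ v, IsHypergraphProperty (f v)) ∧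
      ∃ c C : ℝ, 0 < c ∧ 0 < C ∧ ∃ v₀ : ℕ, ∀ v : ℕ, v₀ ≤ v →
        c * (v : ℝ) ^ ((k : ℝ) / 2) ≤ (sens (f v) : ℝ) ∧
        (sens (f v) : ℝ) ≤ C * (v : ℝ) ^ ((k : ℝ) / 2) := by
  obtain ⟨r, rfl⟩ : ∃ r, k = r + 1 := ⟨k - 1, by omega⟩
  have hr : 1 ≤ r := by omega
  refine ⟨fun v => hasIsolatedClique (cliqueSize r v),
    fun v => isHypergraphProperty_hasIsolatedClique (cliqueSize r v),
    1 / (2 * r.factorial), ((r : ℝ) + 3) ^ r, by positivity, by positivity,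
    4 * (r + 3) ^ 2, fun v hv => ?_⟩
  have hv₁ : 1 ≤ v := by nlinarith
  rw [Nat.cast_add_one]
  exact ⟨le_sens_hasIsolatedClique_cliqueSize hr hv, sens_hasIsolatedClique_cliqueSize_le hr hv₁⟩
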